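/- arXiv:1701.01835 — 2 statements merged into one kernel-verified Lean document; each statement's English description precedes it below -/
import Mathlib

section
/- Let n ≥ 4 be an integer and let α = α(n) := (−(2n−3)+√(4n²−20n+17))/2. Let ψ̂ : [0,∞) → ℝ be smooth with ψ̂(r) > r for all r ≥ 0, ψ̂''(r) > 0 for r > 0, ψ̂'(0) = 0, satisfying ψ̂''(r)/(1+ψ̂'(r)²) + (n−1)(ψ̂'(r)/r − 1/ψ̂(r)) = 0 on (0,∞), together with lim_{r→∞} (ψ̂(r)−r)/r^α = 2^{(α+1)/2} and lim_{r→∞} (ψ̂'(r)−1)/r^{α−1} = α·2^{(α+1)/2}. For k > 0 define ψ̂_k(r) := k^{1/(1−α)} ψ̂(k^{−1/(1−α)} r). Then for every integer m ≥ 2 there exists a constant C > 0 such that |∂_r^m ψ̂_k(r)| ≤ C·k·r^{α−m} for all k > 0 and all r > 0. -/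
open Real Filter Topology

/-- `f` and its first `N` derivatives are, near infinity, `O(r ^ a), O(r ^ (a - 1)), …`:
the symbol class of order `a`, with `N` derivatives. -/
def IsSymbol : ℕ → ℝ → (ℝ → ℝ) → Prop
  | 0, a, f => f =O[atTop] fun r : ℝ => r ^ a
  | N + 1, a, f => (f =O[atTop] fun r : ℝ => r ^ a) ∧
      ∃ f' : ℝ → ℝ, (∀ᶠ r in atTop, HasDerivAt f (f' r) r) ∧ IsSymbol N (a - 1) f'

namespace IsSymbol

variable {N : ℕ} {a b : ℝ} {f g : ℝ → ℝ}

lemma isBigO (h : IsSymbol N a f) : f =O[atTop] fun r : ℝ => r ^ a := by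
  cases N with
  | zero => exact h
  | succ N => exact h.1

lemma eventually_eventuallyEq_nhds (h : f =ᶠ[atTop] g) : ∀ᶠ r in atTop, f =ᶠ[𝓝 r] g := by
  obtain ⟨R, hR⟩ := eventually_atTop.1 h
  filter_upwards [eventually_gt_atTop R] with r hr
  filter_upwards [Ioi_mem_nhds hr] with x hx using hR x (le_of_lt hx)

lemma congr (h : IsSymbol N a f) (hfg : f =ᶠ[atTop] g) : IsSymbol N a g := by
  cases N with
  | zero => exact Asymptotics.IsBigO.congr' h hfg EventuallyEq.rfl
  | succ N =>
    obtain ⟨h0, f', hf', hN⟩ := h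
    refine ⟨h0.congr' hfg EventuallyEq.rfl, f', ?_, hN⟩
    filter_upwards [hf', eventually_eventuallyEq_nhds hfg] with r hr he
    exact hr.congr_of_eventuallyEq he.symm

lemma of_succ (h : IsSymbol (N + 1) a f) : IsSymbol N a f := by
  induction N generalizing a f with
  | zero => exact h.1
  | succ N ih =>
    obtain ⟨h0, f', hf', hN⟩ := h
    exact ⟨h0, f', hf', ih hN⟩

lemma deriv_of_succ (h : IsSymbol (N + 1) a f) : IsSymbol N (a - 1) (deriv f) := by
  obtain ⟨-, f', hf', hN⟩ := h
  refine hN.congr ?_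
  filter_upwards [hf'] with r hr using hr.deriv.symm

lemma iteratedDeriv_isBigO (h : IsSymbol N a f) :
    iteratedDeriv N f =O[atTop] fun r : ℝ => r ^ (a - N) := by
  induction N generalizing a f with
  | zero => simpa [IsSymbol] using h
  | succ N ih =>
    rw [iteratedDeriv_succ']
    convert ih h.deriv_of_succ using 3
    push_cast
    ring

lemma mono (h : IsSymbol N a f) (hab : a ≤ b) : IsSymbol N b f := by
  have key : ∀ {a b : ℝ}, a ≤ b → (fun r : ℝ => r ^ a) =O[atTop] fun r : ℝ => r ^ b := by
    intro a b hab
    refine Asymptotics.IsBigO.of_bound 1 ?_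
    filter_upwards [eventually_ge_atTop (1 : ℝ)] with r hr
    have hr0 : (0 : ℝ) ≤ r := by linarith
    rw [one_mul, Real.norm_of_nonneg (rpow_nonneg hr0 _), Real.norm_of_nonneg (rpow_nonneg hr0 _)]
    exact rpow_le_rpow_of_exponent_le hr hab
  induction N generalizing a b f with
  | zero => exact Asymptotics.IsBigO.trans h (key hab)
  | succ N ih =>
    obtain ⟨h0, f', hf', hN⟩ := h
    exact ⟨h0.trans (key hab), f', hf', ih hN (by linarith)⟩

lemma add (hf : IsSymbol N a f) (hg : IsSymbol N a g) : IsSymbol N a (fun r => f r + g r) := by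
  induction N generalizing a f g with
  | zero => exact Asymptotics.IsBigO.add hf hg
  | succ N ih =>
    obtain ⟨hf0, f', hf', hfN⟩ := hf
    obtain ⟨hg0, g', hg', hgN⟩ := hg
    refine ⟨hf0.add hg0, _, ?_, ih hfN hgN⟩
    filter_upwards [hf', hg'] with r h1 h2 using h1.add h2

lemma isBigO_rpow_mul (hf : f =O[atTop] fun r : ℝ => r ^ a) (hg : g =O[atTop] fun r : ℝ => r ^ b) :
    (fun r => f r * g r) =O[atTop] fun r : ℝ => r ^ (a + b) := by
  refine (hf.mul hg).congr' EventuallyEq.rfl ?_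
  filter_upwards [eventually_gt_atTop (0 : ℝ)] with r hr using (rpow_add hr a b).symm

lemma mul (hf : IsSymbol N a f) (hg : IsSymbol N b g) :
    IsSymbol N (a + b) (fun r => f r * g r) := by
  induction N generalizing a b f g with
  | zero => exact isBigO_rpow_mul hf hg
  | succ N ih =>
    obtain ⟨f', hf', hfN⟩ := hf.2
    obtain ⟨g', hg', hgN⟩ := hg.2
    refine ⟨isBigO_rpow_mul hf.isBigO hg.isBigO, fun r => f' r * g r + f r * g' r, ?_, ?_⟩
    · filter_upwards [hf', hg'] with r h1 h2 using h1.mul h2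
    · have h1 := ih hfN hg.of_succ
      have h2 := ih hf.of_succ hgN
      rw [show a - 1 + b = a + b - 1 by ring] at h1
      rw [show a + (b - 1) = a + b - 1 by ring] at h2
      exact h1.add h2

lemma zero : IsSymbol N a (fun _ => 0) := by
  induction N generalizing a with
  | zero => exact Asymptotics.isBigO_zero _ _
  | succ N ih =>
    exact ⟨Asymptotics.isBigO_zero _ _, _, .of_forall fun r => hasDerivAt_const r 0, ih⟩

lemma const (c : ℝ) : IsSymbol N 0 (fun _ => c) := by
  have h0 : (fun _ : ℝ => c) =O[atTop] fun r : ℝ => r ^ (0 : ℝ) := by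
    simpa using Asymptotics.isBigO_const_const c (one_ne_zero (α := ℝ)) atTop
  cases N with
  | zero => exact h0
  | succ N => exact ⟨h0, _, .of_forall fun r => hasDerivAt_const r c, zero⟩

lemma id : IsSymbol N 1 (fun r => r) := by
  have h0 : (fun r : ℝ => r) =O[atTop] fun r : ℝ => r ^ (1 : ℝ) := by
    simpa using Asymptotics.isBigO_refl (fun r : ℝ => r) atTop
  cases N with
  | zero => exact h0
  | succ N =>
    refine ⟨h0, _, .of_forall fun r => hasDerivAt_id r, ?_⟩
    rw [sub_self]
    exact const 1

lemma inv (hf : IsSymbol N 1 f) (hlow : ∀ᶠ r in atTop, r ≤ f r) :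
    IsSymbol N (-1) (fun r => (f r)⁻¹) := by
  have h0 : (fun r => (f r)⁻¹) =O[atTop] fun r : ℝ => r ^ (-1 : ℝ) := by
    refine Asymptotics.IsBigO.of_bound 1 ?_
    filter_upwards [hlow, eventually_gt_atTop (0 : ℝ)] with r hr hr0
    rw [one_mul, rpow_neg_one, norm_inv, norm_inv, Real.norm_of_nonneg hr0.le,
      Real.norm_of_nonneg (hr0.le.trans hr)]
    exact inv_anti₀ hr0 hr
  induction N with
  | zero => exact h0
  | succ N ih =>
    obtain ⟨f', hf', hfN⟩ := hf.2
    have hi := ih hf.of_succ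
    refine ⟨h0, fun r => (-1) * (f' r * ((f r)⁻¹ * (f r)⁻¹)), ?_, ?_⟩
    · filter_upwards [hf', hlow, eventually_gt_atTop (0 : ℝ)] with r hr hl hr0
      have hne : f r ≠ 0 := (hr0.trans_le hl).ne'
      refine (hr.fun_inv hne).congr_deriv ?_
      field_simp
    · convert (const (-1)).mul (hfN.mul (hi.mul hi)) using 1
      norm_num

end IsSymbol

/-- If a solution of the minimal-surface equation is asymptotic to the cone `ψ = r` to order `a`
together with its first derivative, then all its higher derivatives decay accordingly. -/
lemma isSymbol_deriv_deriv_of_ode {c a : ℝ} {ψ : ℝ → ℝ} (ha : a ≤ 1)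
    (hψ : ContDiff ℝ (⊤ : ℕ∞) ψ) (habove : ∀ r : ℝ, 0 ≤ r → r < ψ r)
    (hODE : ∀ r : ℝ, 0 < r →
      deriv (deriv ψ) r / (1 + (deriv ψ r) ^ 2) + c * (deriv ψ r / r - 1 / ψ r) = 0)
    (h0 : (fun r => ψ r - r) =O[atTop] fun r : ℝ => r ^ a)
    (h1 : (fun r => deriv ψ r - 1) =O[atTop] fun r : ℝ => r ^ (a - 1)) (N : ℕ) :
    IsSymbol N (a - 1 - 1) (deriv (deriv ψ)) := by
  have hd : ∀ r, HasDerivAt ψ (deriv ψ r) r := fun r =>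
    (hψ.differentiable (by simp) r).hasDerivAt
  have hψ' : ContDiff ℝ (⊤ : ℕ∞) (deriv ψ) := (contDiff_infty_iff_deriv.1 hψ).2
  have hdd : ∀ r, HasDerivAt (deriv ψ) (deriv (deriv ψ) r) r := fun r =>
    (hψ'.differentiable (by simp) r).hasDerivAt
  have hdg : ∀ r, HasDerivAt (fun r => ψ r - r) (deriv ψ r - 1) r := fun r =>
    (hd r).sub (hasDerivAt_id r)
  have step : ∀ N, IsSymbol (N + 1) a (fun r => ψ r - r) →
      IsSymbol N (a - 1 - 1) (deriv (deriv ψ)) := by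
    intro N h
    have hg := h.of_succ
    have hg' : IsSymbol N (a - 1) (fun r => deriv ψ r - 1) :=
      h.deriv_of_succ.congr (.of_forall fun r => (hdg r).deriv)
    have hp : IsSymbol N 1 ψ :=
      ((hg.mono ha).add IsSymbol.id).congr (.of_forall fun r => by simp)
    have hp' : IsSymbol N 0 (deriv ψ) :=
      ((hg'.mono (sub_nonpos.2 ha)).add (IsSymbol.const 1)).congr (.of_forall fun r => by simp)
    have hpinv := hp.inv <| (eventually_ge_atTop (0 : ℝ)).mono fun r hr => (habove r hr).le
    have hrinv := (IsSymbol.id (N := N)).inv (.of_forall fun r => le_rfl)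
    have hrg' : IsSymbol N a (fun r => r * (deriv ψ r - 1)) := by
      convert IsSymbol.id.mul hg' using 1
      ring
    have hgg' : IsSymbol N a (fun r => (ψ r - r) * (deriv ψ r - 1)) :=
      (hg.mul hg').mono (by linarith)
    have hsq : IsSymbol N 0 (fun r => 1 + deriv ψ r * deriv ψ r) := by
      refine (IsSymbol.const 1).add ?_
      simpa using hp'.mul hp'
    have hrhs := ((IsSymbol.const (-c)).mul hsq).mul
      (((hg.add hrg').add hgg').mul (hrinv.mul hpinv))
    rw [show 0 + 0 + (a + (-1 + -1)) = a - 1 - 1 by ring] at hrhs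
    refine hrhs.congr ?_
    filter_upwards [eventually_gt_atTop (0 : ℝ)] with r hr
    have hψr : 0 < ψ r := hr.trans (habove r hr.le)
    have hs : 0 < 1 + deriv ψ r ^ 2 := by positivity
    have ho := hODE r hr
    have he : deriv (deriv ψ) r = -c * (1 + deriv ψ r ^ 2) * (deriv ψ r / r - 1 / ψ r) := by
      rw [← eq_neg_iff_add_eq_zero, div_eq_iff hs.ne'] at ho
      rw [ho]
      ring
    rw [he]
    field_simp
    ring
  have all : ∀ N, IsSymbol (N + 1) a (fun r => ψ r - r) := by
    intro N
    induction N with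
    | zero => exact ⟨h0, _, .of_forall hdg, h1⟩
    | succ N ih =>
      exact ⟨h0, _, .of_forall hdg, h1, _, .of_forall fun r => (hdd r).sub_const 1, step N ih⟩
  exact step N (all N)

lemma isBigO_rpow_of_tendsto_div {f : ℝ → ℝ} {a l : ℝ}
    (h : Tendsto (fun r : ℝ => f r / r ^ a) atTop (𝓝 l)) :
    f =O[atTop] fun r : ℝ => r ^ a := by
  refine Asymptotics.isBigO_of_div_tendsto_nhds ?_ l h
  filter_upwards [eventually_gt_atTop (0 : ℝ)] with r hr h0
  exact absurd h0 (rpow_pos_of_pos hr a).ne'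

/-- A continuous function that is `O(r ^ a)` at infinity, with `a ≤ 0`, is bounded by a multiple
of `r ^ a` on the whole half-line. -/
lemma exists_forall_abs_le_rpow {f : ℝ → ℝ} {a : ℝ} (hf : Continuous f) (ha : a ≤ 0)
    (h : f =O[atTop] fun r : ℝ => r ^ a) :
    ∃ C, 0 < C ∧ ∀ r : ℝ, 0 < r → |f r| ≤ C * r ^ a := by
  obtain ⟨C₁, hC₁, hb⟩ := h.exists_pos
  obtain ⟨R, hR⟩ := eventually_atTop.1 hb.bound
  obtain ⟨M, hM⟩ := (isCompact_Icc (a := 0) (b := max R 1)).exists_bound_of_continuousOn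
    hf.continuousOn
  have hR0 : 0 < max R 1 := lt_max_of_lt_right one_pos
  have hM0 : 0 ≤ M := (norm_nonneg _).trans (hM 0 ⟨le_rfl, hR0.le⟩)
  have hRa := rpow_pos_of_pos hR0 a
  refine ⟨C₁ + M / max R 1 ^ a, by positivity, fun r hr => ?_⟩
  have hra := rpow_pos_of_pos hr a
  rw [add_mul]
  rcases le_total r (max R 1) with hle | hle
  · calc |f r| ≤ M := hM r ⟨hr.le, hle⟩
      _ = M / max R 1 ^ a * max R 1 ^ a := by field_simp
      _ ≤ M / max R 1 ^ a * r ^ a := by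
        exact mul_le_mul_of_nonneg_left (rpow_le_rpow_of_nonpos hr hle ha) (by positivity)
      _ ≤ _ := le_add_of_nonneg_left (by positivity)
  · have := hR r ((le_max_left _ _).trans hle)
    rw [Real.norm_of_nonneg hra.le] at this
    exact this.trans (le_add_of_nonneg_right (by positivity))

/-- Decay estimates for higher-order derivatives of the rescaled minimal-surface profile
`ψ̂_k(r) = k^(1/(1−α)) ψ̂(k^(−1/(1−α)) r)`: for every `m ≥ 2` there is `C` with
`|∂_r^m ψ̂_k(r)| ≤ C k r^(α−m)` for all `k > 0` and `r > 0`. -/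
theorem decay_estimates_psi_hat (n : ℕ) (hn : 4 ≤ n)
    (α : ℝ)
    (hα : α = (-(2 * (n : ℝ) - 3) + Real.sqrt (4 * (n : ℝ) ^ 2 - 20 * (n : ℝ) + 17)) / 2)
    (ψ : ℝ → ℝ) (hψ : ContDiff ℝ (⊤ : ℕ∞) ψ)
    (habove : ∀ r : ℝ, 0 ≤ r → r < ψ r)
    (hconv : ∀ r : ℝ, 0 < r → 0 < deriv (deriv ψ) r)
    (hd0 : deriv ψ 0 = 0)
    (hODE : ∀ r : ℝ, 0 < r →
      deriv (deriv ψ) r / (1 + (deriv ψ r) ^ 2) +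
        ((n : ℝ) - 1) * (deriv ψ r / r - 1 / ψ r) = 0)
    (hlim0 : Tendsto (fun r : ℝ => (ψ r - r) / r ^ α) atTop
      (𝓝 ((2 : ℝ) ^ ((α + 1) / 2))))
    (hlim1 : Tendsto (fun r : ℝ => (deriv ψ r - 1) / r ^ (α - 1)) atTop
      (𝓝 (α * (2 : ℝ) ^ ((α + 1) / 2)))) :
    ∀ m : ℕ, 2 ≤ m → ∃ C : ℝ, 0 < C ∧ ∀ k : ℝ, 0 < k → ∀ r : ℝ, 0 < r →
      |iteratedDeriv m (fun x : ℝ => k ^ (1 / (1 - α)) * ψ (k ^ (-(1 / (1 - α))) * x)) r| ≤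
        C * k * r ^ (α - (m : ℝ)) := by
  have hn' : (4 : ℝ) ≤ n := by exact_mod_cast hn
  have hα1 : α < 1 := by
    have : √(4 * (n : ℝ) ^ 2 - 20 * n + 17) < 2 * n - 1 :=
      (sqrt_lt' (by linarith)).2 (by nlinarith)
    linarith
  intro m hm
  obtain ⟨N, rfl⟩ := Nat.exists_eq_add_of_le' hm
  have hbig : iteratedDeriv (N + 2) ψ =O[atTop] fun r : ℝ => r ^ (α - (N + 2 : ℕ)) := by
    rw [iteratedDeriv_succ', iteratedDeriv_succ']
    convert (isSymbol_deriv_deriv_of_ode hα1.le hψ habove hODE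
      (isBigO_rpow_of_tendsto_div hlim0) (isBigO_rpow_of_tendsto_div hlim1) N).iteratedDeriv_isBigO using 3
    push_cast
    ring
  obtain ⟨C, hC, hbound⟩ := exists_forall_abs_le_rpow
    ((contDiff_infty.1 hψ (N + 2)).continuous_iteratedDeriv (N + 2) le_rfl)
    (by push_cast; linarith [(Nat.cast_nonneg N : (0 : ℝ) ≤ N)]) hbig
  refine ⟨C, hC, fun k hk r hr => ?_⟩
  set l : ℝ := k ^ (-(1 / (1 - α))) with hl
  have hl0 : 0 < l := rpow_pos_of_pos hk _
  have hkl : k ^ (1 / (1 - α)) = l ^ (-1 : ℝ) := by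
    rw [hl, ← rpow_mul hk.le]
    congr 1
    ring
  have hlk : l ^ (α - 1) = k := by
    rw [hl, ← rpow_mul hk.le]
    have : -(1 / (1 - α)) * (α - 1) = 1 := by
      have : 1 - α ≠ 0 := by linarith
      field_simp
      ring
    rw [this, rpow_one]
  rw [iteratedDeriv_const_mul_field, iteratedDeriv_comp_const_mul
    (contDiff_infty.1 hψ (N + 2)), hkl, ← rpow_natCast, abs_mul, abs_mul,
    abs_of_pos (rpow_pos_of_pos hl0 _), abs_of_pos (rpow_pos_of_pos hl0 _)]
  calc l ^ (-1 : ℝ) * (l ^ ((N + 2 : ℕ) : ℝ) * |iteratedDeriv (N + 2) ψ (l * r)|)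
      ≤ l ^ (-1 : ℝ) * (l ^ ((N + 2 : ℕ) : ℝ) * (C * (l * r) ^ (α - (N + 2 : ℕ)))) := by
        gcongr
        exact hbound _ (by positivity)
    _ = C * (l ^ (-1 : ℝ) * l ^ ((N + 2 : ℕ) : ℝ) * l ^ (α - (N + 2 : ℕ))) *
          r ^ (α - (N + 2 : ℕ)) := by
        rw [mul_rpow hl0.le hr.le]
        ring
    _ = C * k * r ^ (α - (N + 2 : ℕ)) := by
        rw [← rpow_add hl0, ← rpow_add hl0, ← hlk]
        congr 3
        ring
end

section
/- Let n ≥ 4 be an integer, let α = α(n) := (−(2n−3)+√(4n²−20n+17))/2, and set Υ₁ := −1/(4(n+α−1/2)) and Υ₂ := 1/(16(n+α−1/2)(n+α+1/2)). Then for every y > 0 one has α(α−1) + 2Υ₁(α+2)(α+1) y² + Υ₂(α+4)(α+3) y⁴ > 0; equivalently, the function φ₂(y) = y^α(1 + 2Υ₁ y² + Υ₂ y⁴) satisfies φ₂''(y) > 0 for all y > 0. -/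
open Real Filter Topology

/-- Differentiation of `x ^ a` times an even quartic, on the positive half-line. -/
theorem hasDerivAt_rpow_mul_quartic (a c₀ c₁ c₂ : ℝ) {y : ℝ} (hy : 0 < y) :
    HasDerivAt (fun x : ℝ => x ^ a * (c₀ + c₁ * x ^ 2 + c₂ * x ^ 4))
      (y ^ (a - 1) * (a * c₀ + (a + 2) * c₁ * y ^ 2 + (a + 4) * c₂ * y ^ 4)) y := by
  have hquartic : HasDerivAt (fun x : ℝ => c₀ + c₁ * x ^ 2 + c₂ * x ^ 4)
      (c₁ * (2 * y) + c₂ * (4 * y ^ 3)) y := by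
    simpa using (((hasDerivAt_pow 2 y).const_mul c₁).const_add c₀).fun_add
      ((hasDerivAt_pow 4 y).const_mul c₂)
  have hrpow : y ^ a = y ^ (a - 1) * y := by
    rw [← rpow_add_one hy.ne', sub_add_cancel]
  refine ((hasDerivAt_rpow_const (p := a) (Or.inl hy.ne')).fun_mul hquartic).congr_deriv ?_
  rw [hrpow]
  ring

/-- The second derivative of `x ^ a` times an even quartic, on the positive half-line. -/
theorem deriv_deriv_rpow_mul_quartic (a c₀ c₁ c₂ : ℝ) {y : ℝ} (hy : 0 < y) :
    deriv (deriv fun x : ℝ => x ^ a * (c₀ + c₁ * x ^ 2 + c₂ * x ^ 4)) y =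
      y ^ (a - 2) * (a * (a - 1) * c₀ + c₁ * (a + 2) * (a + 1) * y ^ 2 +
        c₂ * (a + 4) * (a + 3) * y ^ 4) := by
  have hderiv : deriv (fun x : ℝ => x ^ a * (c₀ + c₁ * x ^ 2 + c₂ * x ^ 4)) =ᶠ[𝓝 y]
      fun x => x ^ (a - 1) * (a * c₀ + (a + 2) * c₁ * x ^ 2 + (a + 4) * c₂ * x ^ 4) := by
    filter_upwards [lt_mem_nhds hy] with x hx
    exact (hasDerivAt_rpow_mul_quartic a c₀ c₁ c₂ hx).deriv
  rw [hderiv.deriv_eq, (hasDerivAt_rpow_mul_quartic _ _ _ _ hy).deriv,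
    show a - 1 - 1 = a - 2 by ring]
  ring

/-- Convexity of the eigenfunction `φ₂(y) = y^α(1 + 2Υ₁y² + Υ₂y⁴)`: for all `y > 0`,
`α(α−1) + 2Υ₁(α+2)(α+1)y² + Υ₂(α+4)(α+3)y⁴ > 0`, equivalently `φ₂''(y) > 0`. -/
theorem convexity_phi2 (n : ℕ) (hn : 4 ≤ n)
    (α : ℝ)
    (hα : α = (-(2 * (n : ℝ) - 3) + Real.sqrt (4 * (n : ℝ) ^ 2 - 20 * (n : ℝ) + 17)) / 2)
    (Υ₁ Υ₂ : ℝ)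
    (hΥ₁ : Υ₁ = -1 / (4 * ((n : ℝ) + α - 1 / 2)))
    (hΥ₂ : Υ₂ = 1 / (16 * ((n : ℝ) + α - 1 / 2) * ((n : ℝ) + α + 1 / 2))) :
    ∀ y : ℝ, 0 < y →
      0 < α * (α - 1) + 2 * Υ₁ * (α + 2) * (α + 1) * y ^ 2 +
          Υ₂ * (α + 4) * (α + 3) * y ^ 4 ∧
      0 < deriv (deriv (fun y : ℝ => y ^ α * (1 + 2 * Υ₁ * y ^ 2 + Υ₂ * y ^ 4))) y := by
  intro y hy
  have hn' : (4 : ℝ) ≤ n := by exact_mod_cast hn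
  have hα_lower : -2 ≤ α := by
    have : 2 * (n : ℝ) - 7 ≤ √(4 * (n : ℝ) ^ 2 - 20 * (n : ℝ) + 17) :=
      le_sqrt_of_sq_le (by nlinarith)
    linarith
  have hα_upper : α < -1 := by
    have : √(4 * (n : ℝ) ^ 2 - 20 * (n : ℝ) + 17) < 2 * (n : ℝ) - 5 :=
      (sqrt_lt' (by linarith)).2 (by nlinarith)
    linarith
  have hΥ₁_neg : Υ₁ < 0 := by
    rw [hΥ₁]
    exact div_neg_of_neg_of_pos (by norm_num) (by linarith)
  have hΥ₂_pos : 0 < Υ₂ := by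
    have h₁ : 0 < (n : ℝ) + α - 1 / 2 := by linarith
    have h₂ : 0 < (n : ℝ) + α + 1 / 2 := by linarith
    rw [hΥ₂]
    positivity
  have hpos : 0 < α * (α - 1) + 2 * Υ₁ * (α + 2) * (α + 1) * y ^ 2 +
      Υ₂ * (α + 4) * (α + 3) * y ^ 4 := by
    have hconst : 0 < α * (α - 1) := mul_pos_of_neg_of_neg (by linarith) (by linarith)
    have hquad : 0 ≤ 2 * Υ₁ * (α + 2) * (α + 1) :=
      mul_nonneg_of_nonpos_of_nonpos
        (mul_nonpos_of_nonpos_of_nonneg (by linarith) (by linarith)) (by linarith)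
    have hquart : 0 < Υ₂ * (α + 4) * (α + 3) :=
      mul_pos (mul_pos hΥ₂_pos (by linarith)) (by linarith)
    positivity
  refine ⟨hpos, ?_⟩
  rw [deriv_deriv_rpow_mul_quartic α 1 (2 * Υ₁) Υ₂ hy, mul_one]
  exact mul_pos (rpow_pos_of_pos hy _) hpos
end
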